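/- arXiv:1106.4676 — 2 statements merged into one kernel-verified Lean document; each statement's English description precedes it below -/
import Mathlib

section
/- Let (X,ρ) be a metric space. Then log(d(X)) ≤ ww(X) ≤ d(CL(X), W_ρ); that is, the logarithm of the density of X is at most the weak weight of X, which is at most the density of the hyperspace (CL(X), W_ρ). -/
/-!
Both inequalities rest on elementary cardinal estimates.

For `log d(X) ≤ ww(X)`: a continuous bijection of `X` onto a `T₀` space `Z` gives
`d(X) ≤ ℵ₀ + |X| = ℵ₀ + |Z|`, and a point of a `T₀` space is determined by the members of a base
containing it, so `|Z| ≤ 2 ^ w(Z)` (`mk_le_two_power_of_isBase`).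

For `ww(X) ≤ d(CL(X), W_ρ)`: let `D` be dense in the hyperspace. The functions `ρ(·, A)`, `A ∈ D`,
are continuous on `X` and separate points: for `x ≠ y` with `r = ρ(x, y)`, the Wijsman-open set of
all `A` with `ρ(x, A) < r/2 < ρ(y, A)` contains `{x}`, hence a member of `D`
(`exists_mem_dense_separating`). So the weak topology on `X` determined by these functions is
Tychonoff and coarser than the metric one, and its weight is at most `ℵ₀ + |D|`
(`weight_iInf_induced_le`).
-/

open Cardinal Set Metric Topology

universe u v

/-- The hyperspace of all nonempty closed subsets of a topological space. -/
def CL (X : Type u) [TopologicalSpace X] : Type u :=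
  {A : Set X // A.Nonempty ∧ IsClosed A}

/-- The Wijsman topology on `CL X` determined by a metric `m` on `X`:
the weak (initial) topology determined by the distance functionals
`A ↦ ρ(x, A) = inf {ρ(x,a) : a ∈ A}`, `x ∈ X`. -/
noncomputable def wijsman (X : Type u) [TopologicalSpace X] (m : MetricSpace X) :
    TopologicalSpace (CL X) :=
  ⨅ x : X, TopologicalSpace.induced
    (fun A : CL X => @Metric.infDist X m.toPseudoMetricSpace x A.1) inferInstance

/-- The lower Vietoris topology on `CL X`, with subbase `{U⁻ : U open}` where
`U⁻ = {A ∈ CL X : A ∩ U ≠ ∅}`. -/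
def lowerVietoris (X : Type u) [TopologicalSpace X] : TopologicalSpace (CL X) :=
  TopologicalSpace.generateFrom
    { S | ∃ U : Set X, IsOpen U ∧ S = { A : CL X | (A.1 ∩ U).Nonempty } }

/-- The Vietoris topology on `CL X`, with subbase `{U⁻ : U open} ∪ {U⁺ : U open}`. -/
def vietoris (X : Type u) [TopologicalSpace X] : TopologicalSpace (CL X) :=
  TopologicalSpace.generateFrom
    ({ S | ∃ U : Set X, IsOpen U ∧ S = { A : CL X | (A.1 ∩ U).Nonempty } } ∪
     { S | ∃ U : Set X, IsOpen U ∧ S = { A : CL X | A.1 ⊆ U } })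

/-- The subspace topology on a subset. -/
def subTop {Y : Type u} (t : TopologicalSpace Y) (S : Set Y) : TopologicalSpace ↥S :=
  TopologicalSpace.induced Subtype.val t

section CardinalFunctions

variable (Y : Type u) (t : TopologicalSpace Y)

/-- `ℬ` is a base of the topology `t`. -/
def IsBase (ℬ : Set (Set Y)) : Prop :=
  (∀ U ∈ ℬ, t.IsOpen U) ∧ ∀ U, t.IsOpen U → ∀ x ∈ U, ∃ V ∈ ℬ, x ∈ V ∧ V ⊆ U

/-- The weight: `ℵ₀` plus the least cardinality of a base. -/
noncomputable def weight : Cardinal.{u} :=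
  ℵ₀ + sInf { c : Cardinal.{u} | ∃ ℬ : Set (Set Y), IsBase Y t ℬ ∧ #↥ℬ = c }

/-- The density: `ℵ₀` plus the least cardinality of a dense subset. -/
noncomputable def density : Cardinal.{u} :=
  ℵ₀ + sInf { c : Cardinal.{u} | ∃ D : Set Y, @Dense Y t D ∧ #↥D = c }

/-- A π-base: a family of nonempty open sets such that every nonempty open set
contains a member. -/
def IsPiBase (𝒢 : Set (Set Y)) : Prop :=
  (∀ G ∈ 𝒢, t.IsOpen G ∧ G.Nonempty) ∧
    ∀ U : Set Y, t.IsOpen U → U.Nonempty → ∃ G ∈ 𝒢, G ⊆ U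

/-- The π-weight: `ℵ₀` plus the least cardinality of a π-base. -/
noncomputable def piWeight : Cardinal.{u} :=
  ℵ₀ + sInf { c : Cardinal.{u} | ∃ 𝒢 : Set (Set Y), IsPiBase Y t 𝒢 ∧ #↥𝒢 = c }

/-- A local π-base at `y`: a family of nonempty open sets such that every open
neighborhood of `y` contains a member. -/
def IsLocalPiBase (y : Y) (𝒢 : Set (Set Y)) : Prop :=
  (∀ G ∈ 𝒢, t.IsOpen G ∧ G.Nonempty) ∧
    ∀ U : Set Y, t.IsOpen U → y ∈ U → ∃ G ∈ 𝒢, G ⊆ U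

/-- The π-character at a point. -/
noncomputable def piCharacterAt (y : Y) : Cardinal.{u} :=
  ℵ₀ + sInf { c : Cardinal.{u} | ∃ 𝒢 : Set (Set Y), IsLocalPiBase Y t y 𝒢 ∧ #↥𝒢 = c }

/-- The π-character of the space. -/
noncomputable def piCharacter : Cardinal.{u} := ⨆ y : Y, piCharacterAt Y t y

/-- The pseudocharacter at a point: `ℵ₀` plus the least cardinality of a family of
open sets whose intersection is `{y}`. -/
noncomputable def pseudoCharacterAt (y : Y) : Cardinal.{u} :=
  ℵ₀ + sInf { c : Cardinal.{u} | ∃ 𝒰 : Set (Set Y),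
    (∀ U ∈ 𝒰, t.IsOpen U) ∧ ⋂₀ 𝒰 = {y} ∧ #↥𝒰 = c }

/-- The pseudocharacter of the space. -/
noncomputable def pseudoCharacter : Cardinal.{u} := ⨆ y : Y, pseudoCharacterAt Y t y

/-- The pseudoweight: `ℵ₀` plus the least cardinality of a point-separating family
of open sets. -/
noncomputable def pseudoWeight : Cardinal.{u} :=
  ℵ₀ + sInf { c : Cardinal.{u} | ∃ 𝒰 : Set (Set Y), (∀ U ∈ 𝒰, t.IsOpen U) ∧
    (∀ x y : Y, x ≠ y → ∃ U ∈ 𝒰, (x ∈ U ∧ y ∉ U) ∨ (y ∈ U ∧ x ∉ U)) ∧ #↥𝒰 = c }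

/-- The net weight: `ℵ₀` plus the least cardinality of a network. -/
noncomputable def netWeight : Cardinal.{u} :=
  ℵ₀ + sInf { c : Cardinal.{u} | ∃ 𝒩 : Set (Set Y),
    (∀ U : Set Y, t.IsOpen U → ∀ x ∈ U, ∃ M ∈ 𝒩, x ∈ M ∧ M ⊆ U) ∧ #↥𝒩 = c }

/-- The tightness at a point. -/
noncomputable def tightnessAt (y : Y) : Cardinal.{u} :=
  ℵ₀ + sInf { κ : Cardinal.{u} | ∀ A : Set Y, y ∈ @closure Y t A →
      ∃ B ⊆ A, #↥B ≤ κ ∧ y ∈ @closure Y t B }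

/-- The tightness of the space. -/
noncomputable def tightness : Cardinal.{u} := ⨆ y : Y, tightnessAt Y t y

/-- The Lindelöf number. -/
noncomputable def lindelofNumber : Cardinal.{u} :=
  ℵ₀ + sInf { κ : Cardinal.{u} | ∀ 𝒞 : Set (Set Y), (∀ U ∈ 𝒞, t.IsOpen U) →
      ⋃₀ 𝒞 = Set.univ → ∃ 𝒟 ⊆ 𝒞, #↥𝒟 ≤ κ ∧ ⋃₀ 𝒟 = Set.univ }

/-- The extent: `ℵ₀` plus the supremum of the cardinalities of closed discrete
subspaces. -/
noncomputable def extent : Cardinal.{u} :=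
  ℵ₀ + sSup { c : Cardinal.{u} | ∃ D : Set Y, @IsClosed Y t D ∧
    @DiscreteTopology ↥D (subTop t D) ∧ #↥D = c }

/-- The spread: `ℵ₀` plus the supremum of the cardinalities of discrete subspaces. -/
noncomputable def spread : Cardinal.{u} :=
  ℵ₀ + sSup { c : Cardinal.{u} | ∃ D : Set Y,
    @DiscreteTopology ↥D (subTop t D) ∧ #↥D = c }

/-- The diagonal degree: `ℵ₀` plus the least cardinality of a family of open subsets
of `Y × Y` whose intersection is the diagonal. -/
noncomputable def diagonalDegree : Cardinal.{u} :=
  ℵ₀ + sInf { c : Cardinal.{u} | ∃ 𝒢 : Set (Set (Y × Y)),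
    (∀ G ∈ 𝒢, @IsOpen (Y × Y) (@instTopologicalSpaceProd Y Y t t) G) ∧
    ⋂₀ 𝒢 = { p : Y × Y | p.1 = p.2 } ∧ #↥𝒢 = c }

/-- The uniform weight: `ℵ₀` plus the least cardinality of a base of a compatible
uniformity. -/
noncomputable def uniformWeight : Cardinal.{u} :=
  ℵ₀ + sInf { c : Cardinal.{u} | ∃ U : UniformSpace Y, U.toTopologicalSpace = t ∧
    ∃ 𝒲 : Set (Set (Y × Y)), (∀ W ∈ 𝒲, W ∈ @uniformity Y U) ∧
      (∀ s ∈ @uniformity Y U, ∃ W ∈ 𝒲, W ⊆ s) ∧ #↥𝒲 = c }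

/-- The weak weight: the least weight of a Tychonoff space onto which `Y` maps by a
continuous bijection. -/
noncomputable def weakWeight : Cardinal.{u} :=
  sInf { c : Cardinal.{u} | ∃ (Z : Type u) (s : TopologicalSpace Z) (f : Y → Z),
    @T35Space Z s ∧ @Continuous Y Z t s f ∧ Function.Bijective f ∧ weight Z s = c }

end CardinalFunctions

/-- The hereditary version of a cardinal function: the supremum over all subspaces. -/
noncomputable def hered (f : (Z : Type u) → TopologicalSpace Z → Cardinal.{u})
    (Y : Type u) (t : TopologicalSpace Y) : Cardinal.{u} :=
  ⨆ S : Set Y, f ↥S (subTop t S)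

/-- `log 𝔫 = min {𝔪 : 𝔫 ≤ 2 ^ 𝔪}`. -/
noncomputable def clog (n : Cardinal.{u}) : Cardinal.{u} :=
  sInf { m : Cardinal.{u} | n ≤ 2 ^ m }

lemma aleph0_le_weight (Y : Type u) (t : TopologicalSpace Y) : ℵ₀ ≤ weight Y t :=
  self_le_add_right _ _

lemma exists_base_weight (Y : Type u) (t : TopologicalSpace Y) :
    ∃ ℬ : Set (Set Y), IsBase Y t ℬ ∧ ℵ₀ + #↥ℬ = weight Y t := by
  have hne : { c : Cardinal.{u} | ∃ ℬ : Set (Set Y), IsBase Y t ℬ ∧ #↥ℬ = c }.Nonempty :=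
    ⟨_, {U | t.IsOpen U}, ⟨fun U hU => hU, fun U hU x hx => ⟨U, hU, hx, subset_rfl⟩⟩, rfl⟩
  obtain ⟨ℬ, hB, hc⟩ := csInf_mem hne
  exact ⟨ℬ, hB, by rw [hc]; rfl⟩

lemma exists_dense_density (Y : Type u) (t : TopologicalSpace Y) :
    ∃ D : Set Y, @Dense Y t D ∧ ℵ₀ + #↥D = density Y t := by
  have hne : { c : Cardinal.{u} | ∃ D : Set Y, @Dense Y t D ∧ #↥D = c }.Nonempty :=
    ⟨_, Set.univ, dense_univ, rfl⟩
  obtain ⟨D, hD, hc⟩ := csInf_mem hne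
  exact ⟨D, hD, by rw [hc]; rfl⟩

lemma weight_le_of_isBase {Y : Type u} {t : TopologicalSpace Y} {ℬ : Set (Set Y)}
    (h : IsBase Y t ℬ) : weight Y t ≤ ℵ₀ + #↥ℬ := by
  unfold weight
  gcongr
  exact csInf_le' ⟨ℬ, h, rfl⟩

lemma density_le_mk (Y : Type u) (t : TopologicalSpace Y) : density Y t ≤ ℵ₀ + #Y := by
  unfold density
  gcongr
  exact csInf_le' ⟨Set.univ, dense_univ, mk_univ⟩

/-- A point of a `T₀` space is determined by the members of a base that contain it. -/
lemma mk_le_two_power_of_isBase {Z : Type u} {s : TopologicalSpace Z} [T0Space Z]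
    {ℬ : Set (Set Z)} (h : IsBase Z s ℬ) : #Z ≤ 2 ^ #↥ℬ := by
  rw [← mk_set]
  refine mk_le_of_injective (f := fun z : Z => {B : ↥ℬ | z ∈ B.1}) fun x y hxy => ?_
  have key : ∀ B ∈ ℬ, (x ∈ B ↔ y ∈ B) := fun B hB => Set.ext_iff.1 hxy ⟨B, hB⟩
  refine (inseparable_iff_forall_isOpen.2 fun U hU => ⟨fun hx => ?_, fun hy => ?_⟩).eq
  · obtain ⟨V, hV, hxV, hVU⟩ := h.2 U hU x hx
    exact hVU ((key V hV).1 hxV)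
  · obtain ⟨V, hV, hyV, hVU⟩ := h.2 U hU y hy
    exact hVU ((key V hV).2 hyV)

/-- Finite intersections of members of a subbase form a base, and there are at most `ℵ₀ + #S` finite
subfamilies of `S`. -/
lemma weight_generateFrom_le {Y : Type u} (S : Set (Set Y)) :
    weight Y (TopologicalSpace.generateFrom S) ≤ ℵ₀ + #↥S := by
  let _ : TopologicalSpace Y := TopologicalSpace.generateFrom S
  have hb := TopologicalSpace.isTopologicalBasis_of_subbasis (s := S) rfl
  have hbase : IsBase Y (TopologicalSpace.generateFrom S)
      ((fun f => ⋂₀ f) '' {f : Set (Set Y) | f.Finite ∧ f ⊆ S}) :=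
    ⟨fun U hU => hb.isOpen hU, fun U hU x hx => hb.exists_subset_of_mem_open hx hU⟩
  refine (weight_le_of_isBase hbase).trans ?_
  have hsub : {f : Set (Set Y) | f.Finite ∧ f ⊆ S} ⊆
      Set.range (fun F : Finset ↥S => (Subtype.val '' (F : Set ↥S) : Set (Set Y))) := by
    rintro f ⟨hf, hfS⟩
    refine ⟨(hf.preimage Subtype.val_injective.injOn).toFinset, ?_⟩
    simpa using hfS
  have h1 : #↥((fun f => ⋂₀ f) '' {f : Set (Set Y) | f.Finite ∧ f ⊆ S}) ≤ #(Finset ↥S) :=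
    mk_image_le.trans ((mk_le_mk_of_subset hsub).trans mk_range_le)
  have h2 : #(Finset ↥S) ≤ ℵ₀ + #↥S := by
    rcases finite_or_infinite ↥S with hfin | hinf
    · exact ((lt_aleph0_of_finite (Finset ↥S)).le).trans (self_le_add_right _ _)
    · rw [mk_finset_of_infinite]
      exact self_le_add_left _ _
  calc _ ≤ ℵ₀ + (ℵ₀ + #↥S) := by gcongr; exact h1.trans h2
    _ = ℵ₀ + #↥S := by rw [← add_assoc, aleph0_add_aleph0]

/-- The weak topology determined by a family of real functions has weight at most `ℵ₀` plus the
size of the family, since the preimages of rational intervals form a subbase. -/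
lemma weight_iInf_induced_le {Y ι : Type u} (g : ι → Y → ℝ) :
    weight Y (⨅ i, TopologicalSpace.induced (g i) inferInstance) ≤ ℵ₀ + #ι := by
  set R : Set (Set ℝ) := ⋃ (a : ℚ) (b : ℚ) (_ : a < b), {Ioo (a : ℝ) (b : ℝ)} with hR
  have hRb : TopologicalSpace.IsTopologicalBasis R := Real.isTopologicalBasis_Ioo_rat
  have hRc : R.Countable :=
    countable_iUnion fun a => countable_iUnion fun b => countable_iUnion fun _ =>
      countable_singleton _
  have htop : (⨅ i, TopologicalSpace.induced (g i) inferInstance) =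
      TopologicalSpace.generateFrom (⋃ i, preimage (g i) '' R) := by
    rw [generateFrom_iUnion]
    refine iInf_congr fun i => ?_
    rw [← induced_generateFrom_eq, ← hRb.eq_generateFrom]
  rw [htop]
  refine (weight_generateFrom_le _).trans ?_
  have h1 : #↥(⋃ i, preimage (g i) '' R) ≤ #ι * ℵ₀ := by
    refine (mk_iUnion_le_sum_mk).trans ?_
    refine (sum_le_sum _ (fun _ => ℵ₀) fun i => ?_).trans (by simp)
    exact (hRc.image _).le_aleph0
  calc _ ≤ ℵ₀ + (ℵ₀ + #ι) := by
        gcongr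
        refine h1.trans ((mul_le_max _ _).trans ?_)
        refine max_le (max_le (self_le_add_left _ _) (self_le_add_right _ _))
          (self_le_add_right _ _)
    _ = ℵ₀ + #ι := by rw [← add_assoc, aleph0_add_aleph0]

/-- The distance functionals of a Wijsman-dense family of closed sets separate the points of
`X`. -/
lemma exists_mem_dense_separating {X : Type u} [m : MetricSpace X] {D : Set (CL X)}
    (hD : @Dense (CL X) (wijsman X m) D) {x y : X} (hxy : x ≠ y) :
    ∃ A ∈ D, infDist x A.1 ≠ infDist y A.1 := by
  let _ : TopologicalSpace (CL X) := wijsman X m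
  have hc : ∀ z : X, Continuous fun A : CL X => infDist z A.1 := fun z =>
    continuous_iInf_dom (i := z) continuous_induced_dom
  have hpos : 0 < dist x y := dist_pos.2 hxy
  have hopen : IsOpen ({A : CL X | infDist x A.1 < dist x y / 2} ∩
      {A : CL X | dist x y / 2 < infDist y A.1}) :=
    (isOpen_lt (hc x) continuous_const).inter (isOpen_lt continuous_const (hc y))
  obtain ⟨A, ⟨hA1, hA2⟩, hAD⟩ := hD.inter_open_nonempty _ hopen
    ⟨⟨{x}, singleton_nonempty x, isClosed_singleton⟩, by
      constructor
      · change infDist x {x} < dist x y / 2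
        rw [infDist_singleton, dist_self]
        linarith
      · change dist x y / 2 < infDist y {x}
        rw [infDist_singleton, dist_comm y x]
        linarith⟩
  exact ⟨A, hAD, (lt_trans hA1 hA2).ne⟩

/-- `log(d(X)) ≤ ww(X) ≤ d(CL(X), W_ρ)`. -/
theorem stmt_8 (X : Type u) [MetricSpace X] :
    clog (density X inferInstance) ≤ weakWeight X inferInstance ∧
    weakWeight X inferInstance ≤ density (CL X) (wijsman X ‹MetricSpace X›) := by
  constructor
  · refine le_csInf ⟨_, X, inferInstance, id, inferInstance, continuous_id,
      Function.bijective_id, rfl⟩ ?_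
    rintro c ⟨Z, s, f, hT, -, hf, rfl⟩
    refine csInf_le' ?_
    obtain ⟨ℬ, hB, hw⟩ := exists_base_weight Z s
    have hX : #X ≤ 2 ^ weight Z s := by
      rw [mk_congr (Equiv.ofBijective f hf)]
      refine (mk_le_two_power_of_isBase hB).trans (power_le_power_left two_ne_zero ?_)
      rw [← hw]
      exact self_le_add_left _ _
    have hω : ℵ₀ ≤ 2 ^ weight Z s := (aleph0_le_weight Z s).trans (cantor _).le
    exact (density_le_mk X _).trans (add_le_of_le hω hω hX)
  · obtain ⟨D, hD, hd⟩ := exists_dense_density (CL X) (wijsman X ‹MetricSpace X›)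
    rw [← hd]
    let t : TopologicalSpace X := inferInstance
    let g : ↥D → X → ℝ := fun A x => infDist x A.1.1
    -- The coarser Tychonoff topology on `X` determined by the distances to the members of `D`.
    let s : TopologicalSpace X := ⨅ A, TopologicalSpace.induced (g A) inferInstance
    have hg : ∀ A, @Continuous X ℝ s _ (g A) := fun A =>
      continuous_iInf_dom (i := A) continuous_induced_dom
    have hcr : @CompletelyRegularSpace X s := completelyRegularSpace_iInf fun A =>
      completelyRegularSpace_induced inferInstance _
    have hT2 : @T2Space X s := by
      refine @T2Space.of_injective_continuous X (↥D → ℝ) s _ _ (fun x A => g A x) ?_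
        (@continuous_pi X ↥D (fun _ => ℝ) s _ _ hg)
      intro x y hxy
      by_contra hne
      obtain ⟨A, hA, h⟩ := exists_mem_dense_separating hD hne
      exact h (congrFun hxy ⟨A, hA⟩)
    have hT35 : @T35Space X s :=
      @T35Space.mk X s (@T1Space.t0Space X s (@T2Space.t1Space X s hT2)) hcr
    have hid : @Continuous X X t s id :=
      continuous_iInf_rng.2 fun A =>
        continuous_induced_rng.2 (continuous_infDist_pt A.1.1)
    have hww : weakWeight X t ≤ weight X s :=
      csInf_le' ⟨X, s, id, hT35, hid, Function.bijective_id, rfl⟩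
    exact hww.trans (weight_iInf_induced_le g)
end

section
/- Let (X,ρ) be a metric space such that (CL(X), W_ρ) is a normal topological space. Then exactly one of the following possibilities holds: (1) X is not generalized compact (GK), and then 2^{d(CL(X),W_ρ)} = 2^{d(X)}; (2) X is GK and d(CL(X),W_ρ) = d(X); (3) X is GK and d(CL(X),W_ρ) < d(X), and then 2^{d(CL(X),W_ρ)} = sup{2^κ : κ < d(X)}. Moreover, if the Generalized Continuum Hypothesis holds, then always d(CL(X),W_ρ) = d(X). -/
/-!
Write `d` for the density of `X` and `δ` for the density of its Wijsman hyperspace.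

* `δ ≤ d` (`density_wijsman_le`): the nonempty finite subsets of a dense set of `X` are dense in
  the hyperspace.
* The map `x ↦ {x}` is a closed embedding of `X` into the hyperspace
  (`isClosedEmbedding_singletonCL`). Hence, by Jones' lemma in the normal space `CL X`, every
  closed discrete `D ⊆ X` satisfies `2 ^ |D| ≤ 2 ^ δ` (`two_pow_mk_le`).
* For every infinite `κ < d` there is a closed discrete set of cardinality greater than `κ`
  (`exists_closed_discrete_gt`): the union of maximal `1 / (n + 1)`-separated sets, `n ∈ ℕ`, is
  dense, so at least one of these sets has more than `κ` elements.

If `X` is not GK, then a closed discrete set of size at least `d` gives `2 ^ d ≤ 2 ^ δ`. If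
`δ < d`, then every `κ < d` satisfies `2 ^ κ ≤ 2 ^ δ`, which gives the formula for the supremum.
Under GCH, `δ < d` is impossible: a closed discrete set `D` with `|D| > δ` would have
`2 ^ |D| ≤ 2 ^ δ = δ⁺ ≤ |D|`.
-/

open Cardinal Set Metric Topology

universe u v

/-- A metric space is generalized compact (GK) iff every closed discrete subspace `D`
satisfies `card(D) = ℵ₀ + |D| < d(X)`. -/
def IsGK (X : Type u) [MetricSpace X] : Prop :=
  ∀ D : Set X, IsClosed D → DiscreteTopology ↥D →
    ℵ₀ + #↥D < density X inferInstance

/-- The Generalized Continuum Hypothesis: `2 ^ c` is the successor cardinal of `c`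
for every infinite cardinal `c`. -/
def CardinalGCH : Prop :=
  ∀ c : Cardinal.{u}, ℵ₀ ≤ c → (2 : Cardinal.{u}) ^ c = Order.succ c

lemma density_le (Y : Type u) (t : TopologicalSpace Y) (D : Set Y) (hD : @Dense Y t D) :
    density Y t ≤ ℵ₀ + #↥D := by
  unfold density
  gcongr
  exact csInf_le' ⟨D, hD, rfl⟩

lemma aleph0_le_density (Y : Type u) (t : TopologicalSpace Y) : ℵ₀ ≤ density Y t :=
  self_le_add_right _ _

section Wijsman

variable {X : Type u} [m : MetricSpace X]

lemma continuous_infDist_wijsman (x : X) :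
    @Continuous (CL X) ℝ (wijsman X m) _ (fun A => infDist x A.1) :=
  continuous_iInf_dom (i := x) continuous_induced_dom

lemma nhds_wijsman (A : CL X) :
    @nhds (CL X) (wijsman X m) A =
      ⨅ x : X, Filter.comap (fun A : CL X => infDist x A.1) (𝓝 (infDist x A.1)) := by
  refine (nhds_iInf (ι := X)).trans ?_
  exact iInf_congr fun x => nhds_induced _ _

/-- The embedding of a metric space into its hyperspace by singletons. -/
def singletonCL (x : X) : CL X := ⟨{x}, singleton_nonempty x, isClosed_singleton⟩

lemma isClosedEmbedding_singletonCL :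
    @IsClosedEmbedding X (CL X) _ (wijsman X m) singletonCL := by
  let _ := wijsman X m
  refine IsClosedEmbedding.of_continuous_injective_isClosedMap ?_ ?_ ?_
  · refine continuous_iInf_rng.2 fun x => continuous_induced_rng.2 ?_
    have : (fun A : CL X => infDist x A.1) ∘ singletonCL = fun y => dist x y := by
      ext y
      simp [singletonCL]
    rw [this]
    fun_prop
  · intro x y h
    exact singleton_injective (congrArg Subtype.val h)
  · intro C hC
    refine isClosed_of_closure_subset fun B hB => ?_
    -- Two points `a, b` of a limit `B` of singletons `{c}`, `c ∈ C`, are both limits of the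
    -- points `c`, since `infDist a B = infDist b B = 0`.
    have key : ∀ a ∈ B.1, ∀ b ∈ B.1, ∀ ε > 0, ∃ c ∈ C, dist a c < ε ∧ dist b c < ε := by
      intro a ha b hb ε hε
      have ho : IsOpen {A : CL X | infDist a A.1 < ε ∧ infDist b A.1 < ε} :=
        (isOpen_lt (continuous_infDist_wijsman a) continuous_const).inter
          (isOpen_lt (continuous_infDist_wijsman b) continuous_const)
      obtain ⟨_, hA, c, hc, rfl⟩ := mem_closure_iff.1 hB _ ho
        (by simp [infDist_zero_of_mem ha, infDist_zero_of_mem hb, hε])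
      have hA' : infDist a {c} < ε ∧ infDist b {c} < ε := hA
      exact ⟨c, hc, by simpa only [infDist_singleton] using hA'⟩
    obtain ⟨a, ha⟩ := B.2.1
    refine ⟨a, ?_, Subtype.ext ?_⟩
    · rw [← hC.closure_eq, Metric.mem_closure_iff]
      intro ε hε
      obtain ⟨c, hc, h, -⟩ := key a ha a ha ε hε
      exact ⟨c, hc, h⟩
    · refine Subset.antisymm (singleton_subset_iff.2 ha) fun b hb => ?_
      refine eq_of_forall_dist_le fun ε hε => ?_
      obtain ⟨c, -, h1, h2⟩ := key a ha b hb (ε / 2) (half_pos hε)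
      have := dist_triangle_right b a c
      linarith

/-- Jones' lemma, transported to `X` along the closed embedding by singletons. -/
lemma two_pow_mk_le (hn : @NormalSpace (CL X) (wijsman X m)) (D : Set X) (hD : IsClosed D)
    (hd : DiscreteTopology D) :
    (2 : Cardinal.{u}) ^ #↥D ≤ 2 ^ density (CL X) (wijsman X m) := by
  let _ := wijsman X m
  obtain ⟨S, hS, hc⟩ := exists_dense_density (CL X) (wijsman X m)
  have he : IsClosedEmbedding (fun x : D => singletonCL x.1) :=
    isClosedEmbedding_singletonCL.comp hD.isClosedEmbedding_subtypeVal
  have : DiscreteTopology (range fun x : D => singletonCL x.1) :=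
    he.isEmbedding.toHomeomorph.symm.isEmbedding.discreteTopology
  have h := he.isClosed_range.two_pow_mk_le_two_pow_mk_dense hS
  rw [mk_range_eq _ he.injective] at h
  refine h.trans ?_
  rw [← hc]
  exact power_le_power_left two_ne_zero (self_le_add_left _ _)

/-- A nonempty finite subset of `S`, as a point of the hyperspace. -/
def finiteCL (S : Set X) (F : {F : Finset S // F.Nonempty}) : CL X :=
  ⟨Subtype.val '' (F.1 : Set S), by simpa using F.2, (F.1.finite_toSet.image _).isClosed⟩

lemma dense_range_finiteCL (S : Set X) (hS : Dense S) :
    @Dense (CL X) (wijsman X m) (range (finiteCL S)) := by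
  classical
  intro A
  have hb := Filter.HasBasis.iInf' fun x : X =>
    (Metric.nhds_basis_ball (x := infDist x A.1)).comap (fun A : CL X => infDist x A.1)
  rw [← nhds_wijsman] at hb
  rw [@mem_closure_iff_nhds_basis _ (wijsman X m) _ _ _ _ _ hb]
  rintro ⟨I, r⟩ ⟨hI, hr⟩
  -- a single tolerance below all the finitely many radii
  obtain ⟨ε, hεr, hε⟩ : ∃ ε : ℝ, (∀ i ∈ I, ε < r i) ∧ 0 < ε := by
    have h : ∀ᶠ ε in 𝓝[>] (0 : ℝ), ∀ i ∈ I, ε < r i :=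
      (Filter.eventually_all_finite hI).2 fun i hi =>
        Filter.Eventually.filter_mono nhdsWithin_le_nhds (eventually_lt_nhds (hr i hi))
    exact (h.and self_mem_nhdsWithin).exists
  have hpt : ∀ x : X, ∃ s : S, dist x s < infDist x A.1 + ε ∧ ∃ a ∈ A.1, dist a s < ε := by
    intro x
    obtain ⟨a, ha, hxa⟩ := (infDist_lt_iff A.2.1).1
      (show infDist x A.1 < infDist x A.1 + ε / 2 by linarith)
    obtain ⟨s, hs, has⟩ := hS.exists_dist_lt a (half_pos hε)
    refine ⟨⟨s, hs⟩, ?_, a, ha, by linarith⟩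
    have := dist_triangle x a s
    change dist x s < _
    linarith
  choose s hs1 hs2 using hpt
  -- an extra point guarantees nonemptiness when `I` is empty
  obtain ⟨a₀, -⟩ := A.2.1
  let F : Finset S := insert (s a₀) (hI.toFinset.image s)
  refine ⟨finiteCL S ⟨F, Finset.insert_nonempty _ _⟩, mem_range_self _, ?_⟩
  simp only [mem_iInter, mem_preimage, mem_ball, Real.dist_eq, abs_lt]
  intro x hx
  have hεx := hεr x hx
  have hne : (finiteCL S ⟨F, Finset.insert_nonempty _ _⟩).1.Nonempty := (finiteCL S _).2.1
  constructor
  -- every point of `F` is `ε`-close to `A`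
  · have : infDist x A.1 - ε ≤ infDist x (finiteCL S ⟨F, Finset.insert_nonempty _ _⟩).1 := by
      refine (le_infDist hne).2 ?_
      rintro _ ⟨y, hy, rfl⟩
      obtain ⟨z, rfl⟩ : ∃ z, s z = y := by
        have hy' : y = s a₀ ∨ ∃ a ∈ I, s a = y := by simpa [F] using hy
        rcases hy' with h | ⟨z, -, h⟩
        exacts [⟨_, h.symm⟩, ⟨z, h⟩]
      obtain ⟨a, ha, has⟩ := hs2 z
      have h1 := infDist_le_dist_of_mem (x := x) ha
      have h2 := dist_triangle_right x a (s z : X)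
      linarith
    linarith
  · have hmem : (s x : X) ∈ (finiteCL S ⟨F, Finset.insert_nonempty _ _⟩).1 := by
      refine ⟨s x, ?_, rfl⟩
      have : s x = s a₀ ∨ ∃ a ∈ I, s a = s x := Or.inr ⟨x, hx, rfl⟩
      simpa [F] using this
    have h1 := infDist_le_dist_of_mem (x := x) hmem
    have h2 := hs1 x
    linarith

lemma density_wijsman_le :
    density (CL X) (wijsman X m) ≤ density X inferInstance := by
  obtain ⟨S, hS, hc⟩ := exists_dense_density X inferInstance
  have hcard : #(Finset S) ≤ ℵ₀ + #S := by
    cases finite_or_infinite S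
    · exact (mk_le_aleph0 (α := Finset S)).trans (self_le_add_right _ _)
    · rw [mk_finset_of_infinite]
      exact self_le_add_left _ _
  calc density (CL X) (wijsman X m) ≤ ℵ₀ + #(range (finiteCL S)) :=
        density_le _ _ _ (dense_range_finiteCL S hS)
    _ ≤ ℵ₀ + (ℵ₀ + #S) := by
        gcongr
        exact mk_range_le.trans ((mk_subtype_le _).trans hcard)
    _ = density X inferInstance := by rw [← add_assoc, aleph0_add_aleph0, hc]

lemma exists_maximal_separated (ε : ℝ) (hε : 0 < ε) :
    ∃ D : Set X, IsClosed D ∧ DiscreteTopology D ∧ ∀ x, ∃ y ∈ D, dist x y < ε := by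
  obtain ⟨D, hD⟩ := zorn_subset {N : Set X | N.Pairwise fun x y => ε ≤ dist x y} (by
    intro c hc hchain
    exact ⟨⋃₀ c, (pairwise_sUnion hchain.directedOn).2 fun s hs => hc hs,
      fun s hs => subset_sUnion_of_mem hs⟩)
  have hp : D.Pairwise fun x y => ε ≤ dist x y := hD.prop
  refine ⟨D, isClosed_of_pairwise_le_dist hε hp, ?_, fun x => ?_⟩
  · refine DiscreteTopology.of_forall_le_dist hε fun x y hxy => ?_
    exact hp x.2 y.2 fun h => hxy (Subtype.ext h)
  · by_contra! h
    have hx : x ∈ D := hD.mem_of_prop_insert (hp.insert fun y hy _ =>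
      ⟨h y hy, by rw [dist_comm]; exact h y hy⟩)
    have := h x hx
    rw [dist_self] at this
    linarith

lemma exists_closed_discrete_gt (κ : Cardinal.{u}) (h0 : ℵ₀ ≤ κ)
    (hκ : κ < density X inferInstance) :
    ∃ D : Set X, IsClosed D ∧ DiscreteTopology D ∧ κ < #↥D := by
  by_contra! hcon
  choose D hDc hDd hD using fun n : ℕ =>
    exists_maximal_separated (X := X) (1 / ((n : ℝ) + 1)) Nat.one_div_pos_of_nat
  have hdense : Dense (⋃ n, D n) := by
    refine Metric.dense_iff.2 fun x r hr => ?_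
    obtain ⟨n, hn⟩ := exists_nat_one_div_lt hr
    obtain ⟨y, hy, hxy⟩ := hD n x
    exact ⟨y, by rw [mem_ball, dist_comm]; exact hxy.trans hn, mem_iUnion.2 ⟨n, hy⟩⟩
  have hcard : #(⋃ n, D n) ≤ κ := by
    have h := mk_iUnion_le_lift D
    simp only [lift_uzero, mk_nat, lift_aleph0] at h
    refine h.trans ((mul_le_mul' h0 (ciSup_le' fun n => hcon _ (hDc n) (hDd n))).trans ?_)
    exact (mul_eq_self h0).le
  have := density_le X inferInstance _ hdense
  refine absurd hκ (not_lt.2 (this.trans ((add_le_add h0 hcard).trans (add_eq_self h0).le)))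

end Wijsman

/-- if `(CL(X), W_ρ)` is normal, then exactly one of the three listed
possibilities holds, and under GCH always `d(CL(X)) = d(X)`. -/
theorem stmt_9 (X : Type u) [MetricSpace X]
    (hn : @NormalSpace (CL X) (wijsman X ‹MetricSpace X›)) :
    ((¬ IsGK X ∧
        (2 : Cardinal.{u}) ^ density (CL X) (wijsman X ‹MetricSpace X›) =
          (2 : Cardinal.{u}) ^ density X inferInstance) ∨
      (IsGK X ∧
        density (CL X) (wijsman X ‹MetricSpace X›) = density X inferInstance) ∨
      (IsGK X ∧
        density (CL X) (wijsman X ‹MetricSpace X›) < density X inferInstance ∧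
        (2 : Cardinal.{u}) ^ density (CL X) (wijsman X ‹MetricSpace X›) =
          sSup { c : Cardinal.{u} | ∃ κ < density X inferInstance, c = (2 : Cardinal.{u}) ^ κ })) ∧
    (CardinalGCH.{u} →
      density (CL X) (wijsman X ‹MetricSpace X›) = density X inferInstance) := by
  have hle := density_wijsman_le (X := X)
  have h0 := aleph0_le_density (CL X) (wijsman X ‹MetricSpace X›)
  -- For finite `κ` the bound follows from `κ ≤ ℵ₀ ≤ δ`, without closed discrete sets.
  have hpow : ∀ κ < density X inferInstance,
      (2 : Cardinal.{u}) ^ κ ≤ 2 ^ density (CL X) (wijsman X ‹MetricSpace X›) := by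
    intro κ hκ
    rcases le_total ℵ₀ κ with h | h
    · obtain ⟨D, hc, hd, hD⟩ := exists_closed_discrete_gt κ h hκ
      exact (power_le_power_left two_ne_zero hD.le).trans (two_pow_mk_le hn D hc hd)
    · exact power_le_power_left two_ne_zero (h.trans h0)
  refine ⟨?_, fun gch => ?_⟩
  · by_cases hGK : IsGK X
    · rcases hle.eq_or_lt with h | h
      · exact Or.inr (Or.inl ⟨hGK, h⟩)
      · refine Or.inr (Or.inr ⟨hGK, h, ?_⟩)
        refine le_antisymm (le_csSup
          ⟨2 ^ density (CL X) (wijsman X ‹MetricSpace X›), ?_⟩ ⟨_, h, rfl⟩) (csSup_le' ?_)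
        all_goals
          rintro _ ⟨κ, hκ, rfl⟩
          exact hpow κ hκ
    · refine Or.inl ⟨hGK, le_antisymm (power_le_power_left two_ne_zero hle) ?_⟩
      unfold IsGK at hGK
      push Not at hGK
      obtain ⟨D, hc, hd, hD⟩ := hGK
      refine (power_le_power_left two_ne_zero hD).trans ?_
      rw [power_add]
      -- `2 ^ ℵ₀ * 2 ^ |D| ≤ 2 ^ δ * 2 ^ δ = 2 ^ δ`
      refine (mul_le_mul' (power_le_power_left two_ne_zero h0) (two_pow_mk_le hn D hc hd)).trans ?_
      rw [← power_add, add_eq_self h0]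
  · by_contra hne
    obtain ⟨D, hc, hd, hD⟩ := exists_closed_discrete_gt _ h0 (lt_of_le_of_ne hle hne)
    have h := two_pow_mk_le hn D hc hd
    rw [gch _ h0] at h
    exact absurd (cantor #↥D) (not_lt.2 (h.trans (Order.succ_le_of_lt hD)))
end
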